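/- arXiv:2210.05500 — 2 statements merged into one kernel-verified Lean document; each statement's English description precedes it below -/
import Mathlib

section
/- Assume that for every g ∈ G one has ∑_{h∈G} H²(μ_{gh}, μ_h) < ∞. Then for every g ∈ G, the infinite product ∏_{h∈G} (1 − H²(μ_{gh}^t, μ_h^t)) (the limit of partial products over finite subsets of G, each factor lying in (0,1]) converges to 1 as t → 0⁺. -/
open MeasureTheory Filter Set
open scoped ENNReal NNReal Topology

noncomputable section

/-- The squared Hellinger distance `H²(α,β) = ½∫(√(dα/dζ) − √(dβ/dζ))² dζ`,
computed with the reference probability measure `ζ = ½(α+β)`. -/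
def hellingerSq {Ω : Type*} [MeasurableSpace Ω] (α β : Measure Ω) : ℝ :=
  (1 / 2) * ∫ ω,
      (Real.sqrt ((α.rnDeriv ((2 : ℝ≥0∞)⁻¹ • (α + β)) ω).toReal) -
        Real.sqrt ((β.rnDeriv ((2 : ℝ≥0∞)⁻¹ • (α + β)) ω).toReal)) ^ 2
    ∂((2 : ℝ≥0∞)⁻¹ • (α + β))

/-- The convex combination `(1−t)·ν + t·μ` of two measures. -/
def mix {Ω : Type*} [MeasurableSpace Ω] (t : ℝ) (ν μ : Measure Ω) : Measure Ω :=
  ENNReal.ofReal (1 - t) • ν + ENNReal.ofReal t • μ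

section Hellinger

variable {Ω : Type*} [MeasurableSpace Ω]

lemma sq_sqrt_sub_sqrt_le_add {a b : ℝ} (ha : 0 ≤ a) (hb : 0 ≤ b) :
    (√a - √b) ^ 2 ≤ a + b := by
  nlinarith [Real.sq_sqrt ha, Real.sq_sqrt hb, mul_nonneg (Real.sqrt_nonneg a) (Real.sqrt_nonneg b)]

lemma sq_sqrt_add_sub_sqrt_add_le {a b c : ℝ} (ha : 0 ≤ a) (hb : 0 ≤ b) (hc : 0 ≤ c) :
    (√(c + a) - √(c + b)) ^ 2 ≤ (√a - √b) ^ 2 := by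
  have hcs : c + √a * √b ≤ √(c + a) * √(c + b) := by
    rw [← Real.sqrt_mul (add_nonneg hc ha)]
    apply Real.le_sqrt_of_sq_le
    nlinarith [Real.sq_sqrt ha, Real.sq_sqrt hb,
      mul_nonneg hc (sq_nonneg (√a - √b)), mul_pow (√a) (√b) 2]
  nlinarith [Real.sq_sqrt ha, Real.sq_sqrt hb, Real.sq_sqrt (add_nonneg hc ha),
    Real.sq_sqrt (add_nonneg hc hb)]

lemma sq_sqrt_mul_sub_sqrt_mul {r : ℝ} (hr : 0 ≤ r) (a b : ℝ) :
    (√(r * a) - √(r * b)) ^ 2 = r * (√a - √b) ^ 2 := by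
  rw [Real.sqrt_mul hr, Real.sqrt_mul hr, ← mul_sub, mul_pow, Real.sq_sqrt hr]

lemma integrable_sq_sqrt_rnDeriv_sub (α β ζ : Measure Ω) [IsFiniteMeasure α] [IsFiniteMeasure β] :
    Integrable (fun ω => (√(α.rnDeriv ζ ω).toReal - √(β.rnDeriv ζ ω).toReal) ^ 2) ζ := by
  refine ((Measure.integrable_toReal_rnDeriv (μ := α)).add
    (Measure.integrable_toReal_rnDeriv (μ := β))).mono' ?_ (ae_of_all _ fun ω => ?_)
  · have hα := Measure.measurable_rnDeriv α ζ
    have hβ := Measure.measurable_rnDeriv β ζ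
    exact (by fun_prop : Measurable _).aestronglyMeasurable
  · rw [Real.norm_of_nonneg (sq_nonneg _)]
    exact sq_sqrt_sub_sqrt_le_add ENNReal.toReal_nonneg ENNReal.toReal_nonneg

lemma absolutelyContinuous_half_smul_add_left (α β : Measure Ω) :
    α ≪ (2 : ℝ≥0∞)⁻¹ • (α + β) :=
  (Measure.AbsolutelyContinuous.rfl.add_right β).trans
    (Measure.absolutelyContinuous_smul (by simp))

lemma absolutelyContinuous_half_smul_add_right (α β : Measure Ω) :
    β ≪ (2 : ℝ≥0∞)⁻¹ • (α + β) := by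
  rw [add_comm]
  exact absolutelyContinuous_half_smul_add_left β α

/-- The squared Hellinger distance may be computed with any dominating measure. -/
lemma hellingerSq_eq_integral (α β ζ : Measure Ω) [IsFiniteMeasure α] [IsFiniteMeasure β]
    [IsFiniteMeasure ζ] (hα : α ≪ ζ) (hβ : β ≪ ζ) :
    hellingerSq α β =
      (1 / 2) * ∫ ω, (√(α.rnDeriv ζ ω).toReal - √(β.rnDeriv ζ ω).toReal) ^ 2 ∂ζ := by
  unfold hellingerSq
  have hαm := absolutelyContinuous_half_smul_add_left α β
  have hβm := absolutelyContinuous_half_smul_add_right α β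
  have hfin : IsFiniteMeasure ((2 : ℝ≥0∞)⁻¹ • (α + β)) :=
    Measure.smul_finite _ (by simp)
  have hmζ : (2 : ℝ≥0∞)⁻¹ • (α + β) ≪ ζ :=
    Measure.AbsolutelyContinuous.smul_left (Measure.AbsolutelyContinuous.add_left hα hβ) _
  generalize (2 : ℝ≥0∞)⁻¹ • (α + β) = m at *
  rw [← integral_rnDeriv_smul hmζ]
  congr 1
  apply integral_congr_ae
  filter_upwards [Measure.rnDeriv_mul_rnDeriv (κ := ζ) hαm,
    Measure.rnDeriv_mul_rnDeriv (κ := ζ) hβm] with ω h₁ h₂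
  rw [← h₁, ← h₂, Pi.mul_apply, Pi.mul_apply, ENNReal.toReal_mul, ENNReal.toReal_mul, smul_eq_mul,
    mul_comm (α.rnDeriv m ω).toReal, mul_comm (β.rnDeriv m ω).toReal,
    sq_sqrt_mul_sub_sqrt_mul ENNReal.toReal_nonneg]

lemma hellingerSq_nonneg (α β : Measure Ω) : 0 ≤ hellingerSq α β :=
  mul_nonneg (by norm_num) (integral_nonneg fun _ => sq_nonneg _)

lemma hellingerSq_lt_one (α β : Measure Ω) [IsProbabilityMeasure α] [IsProbabilityMeasure β]
    (h : α ≪ β) : hellingerSq α β < 1 := by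
  unfold hellingerSq
  have hαm := absolutelyContinuous_half_smul_add_left α β
  have hβm := absolutelyContinuous_half_smul_add_right α β
  have hfin : IsFiniteMeasure ((2 : ℝ≥0∞)⁻¹ • (α + β)) :=
    Measure.smul_finite _ (by simp)
  generalize (2 : ℝ≥0∞)⁻¹ • (α + β) = m at *
  have hd := integrable_sq_sqrt_rnDeriv_sub α β m
  have hs := (Measure.integrable_toReal_rnDeriv (μ := α) (ν := m)).add
    (Measure.integrable_toReal_rnDeriv (μ := β) (ν := m))
  have hsum : ∫ ω, ((α.rnDeriv m ω).toReal + (β.rnDeriv m ω).toReal) ∂m = 2 := by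
    rw [integral_add Measure.integrable_toReal_rnDeriv Measure.integrable_toReal_rnDeriv,
      Measure.integral_toReal_rnDeriv hαm, Measure.integral_toReal_rnDeriv hβm]
    norm_num
  suffices hlt : ∫ ω, (√(α.rnDeriv m ω).toReal - √(β.rnDeriv m ω).toReal) ^ 2 ∂m <
      ∫ ω, ((α.rnDeriv m ω).toReal + (β.rnDeriv m ω).toReal) ∂m by
    linarith
  have hle : ∀ ω, (√(α.rnDeriv m ω).toReal - √(β.rnDeriv m ω).toReal) ^ 2 ≤
      (α.rnDeriv m ω).toReal + (β.rnDeriv m ω).toReal := fun ω =>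
    sq_sqrt_sub_sqrt_le_add ENNReal.toReal_nonneg ENNReal.toReal_nonneg
  refine (integral_mono hd hs hle).lt_of_ne fun heq => ?_
  have hae := (integral_eq_iff_of_ae_le hd hs (ae_of_all _ hle)).1 heq
  have hfalse : ∀ᵐ _ ∂α, False := by
    filter_upwards [hαm.ae_le hae, Measure.rnDeriv_pos hαm, h.ae_le (Measure.rnDeriv_pos hβm),
      hαm.ae_le (Measure.rnDeriv_ne_top α m), hαm.ae_le (Measure.rnDeriv_ne_top β m)]
      with ω h₀ hα₀ hβ₀ hα₁ hβ₁
    have ha := ENNReal.toReal_pos hα₀.ne' hα₁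
    have hb := ENNReal.toReal_pos hβ₀.ne' hβ₁
    simp only [Pi.add_apply] at h₀
    nlinarith [Real.sq_sqrt ha.le, Real.sq_sqrt hb.le,
      mul_pos (Real.sqrt_pos.2 ha) (Real.sqrt_pos.2 hb)]
  exact IsProbabilityMeasure.ne_zero α (by simpa using hfalse)

lemma toReal_rnDeriv_mix {t : ℝ} (ht : t ∈ Icc (0 : ℝ) 1) (ν μ ζ : Measure Ω)
    [IsFiniteMeasure ν] [IsFiniteMeasure μ] [IsFiniteMeasure ζ] :
    ∀ᵐ ω ∂ζ, ((mix t ν μ).rnDeriv ζ ω).toReal =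
      (1 - t) * (ν.rnDeriv ζ ω).toReal + t * (μ.rnDeriv ζ ω).toReal := by
  have hν : IsFiniteMeasure (ENNReal.ofReal (1 - t) • ν) :=
    Measure.smul_finite _ ENNReal.ofReal_ne_top
  have hμ : IsFiniteMeasure (ENNReal.ofReal t • μ) :=
    Measure.smul_finite _ ENNReal.ofReal_ne_top
  filter_upwards [Measure.rnDeriv_add (ENNReal.ofReal (1 - t) • ν) (ENNReal.ofReal t • μ) ζ,
    Measure.rnDeriv_smul_left_of_ne_top ν ζ (ENNReal.ofReal_ne_top (r := 1 - t)),
    Measure.rnDeriv_smul_left_of_ne_top μ ζ (ENNReal.ofReal_ne_top (r := t)),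
    Measure.rnDeriv_ne_top ν ζ, Measure.rnDeriv_ne_top μ ζ] with ω h₁ h₂ h₃ h₄ h₅
  rw [mix, h₁, Pi.add_apply, h₂, h₃, Pi.smul_apply, Pi.smul_apply, smul_eq_mul, smul_eq_mul,
    ENNReal.toReal_add (ENNReal.mul_ne_top ENNReal.ofReal_ne_top h₄)
      (ENNReal.mul_ne_top ENNReal.ofReal_ne_top h₅), ENNReal.toReal_mul, ENNReal.toReal_mul,
    ENNReal.toReal_ofReal (sub_nonneg.2 ht.2), ENNReal.toReal_ofReal ht.1]

lemma hellingerSq_mix_le {t : ℝ} (ht : t ∈ Icc (0 : ℝ) 1) (ν α β : Measure Ω)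
    [IsFiniteMeasure ν] [IsFiniteMeasure α] [IsFiniteMeasure β] :
    hellingerSq (mix t ν α) (mix t ν β) ≤ t * hellingerSq α β := by
  have hfin : ∀ μ : Measure Ω, IsFiniteMeasure μ → IsFiniteMeasure (mix t ν μ) := fun μ _ => by
    have h₁ : IsFiniteMeasure (ENNReal.ofReal (1 - t) • ν) :=
      Measure.smul_finite _ ENNReal.ofReal_ne_top
    have h₂ : IsFiniteMeasure (ENNReal.ofReal t • μ) :=
      Measure.smul_finite _ ENNReal.ofReal_ne_top
    unfold mix
    infer_instance
  have := hfin α inferInstance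
  have := hfin β inferInstance
  have hν : ν ≪ ν + α + β :=
    (Measure.AbsolutelyContinuous.rfl.add_right α).add_right β
  have hα : α ≪ ν + α + β := by
    rw [add_comm ν α]
    exact (Measure.AbsolutelyContinuous.rfl.add_right ν).add_right β
  have hβ : β ≪ ν + α + β := by
    rw [add_comm (ν + α) β]
    exact Measure.AbsolutelyContinuous.rfl.add_right _
  have hmix : ∀ μ : Measure Ω, μ ≪ ν + α + β → mix t ν μ ≪ ν + α + β := fun μ hμ =>
    Measure.AbsolutelyContinuous.add_left (hν.smul_left _) (hμ.smul_left _)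
  rw [hellingerSq_eq_integral _ _ _ (hmix α hα) (hmix β hβ), hellingerSq_eq_integral α β _ hα hβ,
    mul_left_comm, ← integral_const_mul t]
  gcongr 1 / 2 * ?_
  refine integral_mono_ae (integrable_sq_sqrt_rnDeriv_sub _ _ _)
    ((integrable_sq_sqrt_rnDeriv_sub _ _ _).const_mul t) ?_
  filter_upwards [toReal_rnDeriv_mix ht ν α (ν + α + β), toReal_rnDeriv_mix ht ν β (ν + α + β)]
    with ω h₁ h₂
  rw [h₁, h₂, ← sq_sqrt_mul_sub_sqrt_mul ht.1]
  exact sq_sqrt_add_sub_sqrt_add_le (mul_nonneg ht.1 ENNReal.toReal_nonneg)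
    (mul_nonneg ht.1 ENNReal.toReal_nonneg)
    (mul_nonneg (sub_nonneg.2 ht.2) ENNReal.toReal_nonneg)

end Hellinger

lemma one_sub_sum_le_prod_one_sub {ι : Type*} (s : Finset ι) {f : ι → ℝ} (h₀ : ∀ i, 0 ≤ f i)
    (h₁ : ∀ i, f i ≤ 1) : 1 - ∑ i ∈ s, f i ≤ ∏ i ∈ s, (1 - f i) := by
  classical
  induction s using Finset.induction_on with
  | empty => simp
  | insert a s ha ih =>
    rw [Finset.sum_insert ha, Finset.prod_insert ha]
    nlinarith [h₀ a, mul_le_mul_of_nonneg_left ih (sub_nonneg.2 (h₁ a)),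
      mul_nonneg (h₀ a) (Finset.sum_nonneg fun i (_ : i ∈ s) => h₀ i)]

lemma multipliable_one_sub_of_summable {ι : Type*} {f : ι → ℝ} (hf : Summable f) :
    Multipliable fun i => 1 - f i := by
  simpa only [sub_eq_add_neg] using Real.multipliable_one_add_of_summable hf.neg

lemma tprod_one_sub_mem_Icc {ι : Type*} {f : ι → ℝ} (h₀ : ∀ i, 0 ≤ f i) (h₁ : ∀ i, f i ≤ 1)
    (hf : Summable f) : ∏' i, (1 - f i) ∈ Icc (1 - ∑' i, f i) 1 := by
  have hprod := (multipliable_one_sub_of_summable hf).hasProd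
  refine ⟨ge_of_tendsto' hprod fun s => ?_, le_of_tendsto' hprod fun s => ?_⟩
  · exact (sub_le_sub_left (hf.sum_le_tsum s fun i _ => h₀ i) 1).trans
      (one_sub_sum_le_prod_one_sub s h₀ h₁)
  · exact Finset.prod_le_one (fun i _ => sub_nonneg.2 (h₁ i)) fun i _ => sub_le_self 1 (h₀ i)

/-- if `∑_h H²(μ_{gh}, μ_h) < ∞` for every `g`, then for every `g` the
infinite product `∏_{h∈G} (1 − H²(μ_{gh}^t, μ_h^t))` (each factor lying in `(0,1]`,
and the product converging over finite subsets) tends to `1` as `t → 0⁺`. -/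
theorem prod_tendsto_one
    {G X₀ : Type*} [Group G] [Countable G] [Infinite G]
    [MeasurableSpace X₀] [StandardBorelSpace X₀]
    (μs : G → Measure X₀) (hprob : ∀ g : G, IsProbabilityMeasure (μs g))
    (hequiv : ∀ g h : G, μs g ≪ μs h)
    (ν : Measure X₀) (hν : IsProbabilityMeasure ν)
    (hsum : ∀ g : G, Summable (fun h : G => hellingerSq (μs (g * h)) (μs h))) :
    ∀ g : G,
      (∀ t ∈ Set.Icc (0:ℝ) 1,
        (∀ h : G,
          1 - hellingerSq (mix t ν (μs (g * h))) (mix t ν (μs h)) ∈ Set.Ioc (0:ℝ) 1) ∧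
        Multipliable (fun h : G =>
          1 - hellingerSq (mix t ν (μs (g * h))) (mix t ν (μs h)))) ∧
      Tendsto (fun t : ℝ =>
          ∏' h : G, (1 - hellingerSq (mix t ν (μs (g * h))) (mix t ν (μs h))))
        (𝓝[>] 0) (𝓝 1) := by
  intro g
  have hbound : ∀ t ∈ Icc (0 : ℝ) 1, ∀ h,
      hellingerSq (mix t ν (μs (g * h))) (mix t ν (μs h)) ≤
        t * hellingerSq (μs (g * h)) (μs h) := fun t ht h => hellingerSq_mix_le ht _ _ _
  have hlt : ∀ t ∈ Icc (0 : ℝ) 1, ∀ h,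
      hellingerSq (mix t ν (μs (g * h))) (mix t ν (μs h)) < 1 := fun t ht h =>
    (hbound t ht h).trans_lt ((mul_le_of_le_one_left (hellingerSq_nonneg _ _) ht.2).trans_lt
      (hellingerSq_lt_one _ _ (hequiv _ _)))
  have hsummable : ∀ t ∈ Icc (0 : ℝ) 1, Summable fun h =>
      hellingerSq (mix t ν (μs (g * h))) (mix t ν (μs h)) := fun t ht =>
    ((hsum g).mul_left t).of_nonneg_of_le (fun _ => hellingerSq_nonneg _ _) (hbound t ht)
  refine ⟨fun t ht => ⟨fun h => ⟨sub_pos.2 (hlt t ht h), sub_le_self 1 (hellingerSq_nonneg _ _)⟩,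
    multipliable_one_sub_of_summable (hsummable t ht)⟩, ?_⟩
  have hmem : ∀ᶠ t : ℝ in 𝓝[>] 0, t ∈ Icc (0 : ℝ) 1 :=
    mem_of_superset (Ioc_mem_nhdsGT one_pos) Ioc_subset_Icc_self
  have hlim : Tendsto (fun t : ℝ => 1 - t * ∑' h, hellingerSq (μs (g * h)) (μs h))
      (𝓝[>] 0) (𝓝 1) := by
    have hcont : Continuous fun t : ℝ => 1 - t * ∑' h, hellingerSq (μs (g * h)) (μs h) := by
      fun_prop
    simpa using (hcont.tendsto 0).mono_left nhdsWithin_le_nhds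
  refine tendsto_of_tendsto_of_tendsto_of_le_of_le' hlim tendsto_const_nhds ?_ ?_
  · filter_upwards [hmem] with t ht
    refine le_trans ?_ (tprod_one_sub_mem_Icc (fun _ => hellingerSq_nonneg _ _)
      (fun h => (hlt t ht h).le) (hsummable t ht)).1
    rw [← tsum_mul_left]
    exact sub_le_sub_left
      ((hsummable t ht).tsum_le_tsum (hbound t ht) ((hsum g).mul_left t)) 1
  · filter_upwards [hmem] with t ht
    exact (tprod_one_sub_mem_Icc (fun _ => hellingerSq_nonneg _ _)
      (fun h => (hlt t ht h).le) (hsummable t ht)).2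
end
end

section
/- Let G be a countable group, let (X,μ) and (Y,ν) be standard probability spaces carrying nonsingular G-actions, and let ψ : X → Y be a measurable G-equivariant map with ψ_*μ = ν. If a sequence (η_n) of probability measures on G is strongly recurrent for the action G ↷ (X,μ), then (η_n) is strongly recurrent for the action G ↷ (Y,ν). -/
open MeasureTheory Filter Set
open scoped ENNReal NNReal Topology

noncomputable section

/-- The sequence `(η n)` of probability measures on `G` is strongly recurrent for
the nonsingular action `act` on `(X, μ)`. -/
def StronglyRecurrentSeq {G X : Type*} [Group G] [MeasurableSpace X] (μ : Measure X)
    (act : G → X → X) (η : ℕ → G → ℝ≥0∞) : Prop :=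
  Tendsto (fun n =>
      ∑' h : G, (η n h) ^ 2 *
        ∫⁻ x, (∑' k : G, η n (h * k⁻¹) * (μ.map (act k⁻¹)).rnDeriv μ x)⁻¹ ∂μ)
    atTop (𝓝 0)

/-- The tangent-line inequality for the convex function `s ↦ s⁻¹`. -/
lemma ENNReal.two_mul_le_inv_add_mul_sq (s : ℝ≥0∞) {t : ℝ≥0∞} (ht : t ≠ ∞) :
    2 * t ≤ s⁻¹ + s * t ^ 2 := by
  rcases eq_or_ne s 0 with rfl | hs0
  · simp
  rcases eq_or_ne s ∞ with rfl | hs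
  · rcases eq_or_ne t 0 with rfl | ht0
    · simp
    · simp [ENNReal.top_mul, ht0]
  lift s to ℝ≥0 using hs
  lift t to ℝ≥0 using ht
  have hs0' : s ≠ 0 := by simpa using hs0
  rw [← ENNReal.coe_inv hs0']
  norm_cast
  rw [← NNReal.coe_le_coe]
  push_cast
  have hpos : (0 : ℝ) < s := NNReal.coe_pos.2 (pos_iff_ne_zero.2 hs0')
  have key : (s : ℝ)⁻¹ + s * t ^ 2 - 2 * t = s * ((s : ℝ)⁻¹ - t) ^ 2 := by
    field_simp
    ring
  have : 0 ≤ (s : ℝ) * ((s : ℝ)⁻¹ - t) ^ 2 := by positivity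
  linarith

/-- Conditional Jensen inequality for `s ↦ s⁻¹`: the hypothesis `hsf` says that `f ∘ ψ` is the
conditional expectation of `s` given `ψ`. -/
lemma lintegral_inv_le_of_lintegral_mul_comp_eq {X Y : Type*} [MeasurableSpace X]
    [MeasurableSpace Y] {μ : Measure X} {ν : Measure Y} [IsFiniteMeasure ν] {ψ : X → Y}
    (hψ : MeasurePreserving ψ μ ν) {s : X → ℝ≥0∞} (hs : Measurable s)
    {f : Y → ℝ≥0∞} (hf : Measurable f)
    (hsf : ∀ T : Y → ℝ≥0∞, Measurable T → ∫⁻ x, s x * T (ψ x) ∂μ = ∫⁻ y, f y * T y ∂ν) :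
    ∫⁻ y, (f y)⁻¹ ∂ν ≤ ∫⁻ x, (s x)⁻¹ ∂μ := by
  have bound : ∀ m : ℕ, ∫⁻ y, min (f y)⁻¹ m ∂ν ≤ ∫⁻ x, (s x)⁻¹ ∂μ := by
    intro m
    have hψm := hψ.measurable
    set t : Y → ℝ≥0∞ := fun y => min (f y)⁻¹ m
    have htm : Measurable t := hf.inv.min measurable_const
    have hfin : ∫⁻ y, t y ∂ν ≠ ∞ := by
      refine ne_top_of_le_ne_top ?_ (lintegral_mono fun y => min_le_right _ _)
      rw [lintegral_const]
      exact ENNReal.mul_ne_top (ENNReal.natCast_ne_top m) (measure_ne_top ν _)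
    have hsq : ∫⁻ y, f y * t y ^ 2 ∂ν ≤ ∫⁻ y, t y ∂ν := by
      refine lintegral_mono fun y => ?_
      calc f y * t y ^ 2 = (f y * t y) * t y := by ring
        _ ≤ (f y * (f y)⁻¹) * t y := by gcongr; exact min_le_left _ _
        _ ≤ 1 * t y := by gcongr; exact ENNReal.mul_inv_le_one _
        _ = t y := one_mul _
    have hle : ∫⁻ y, t y ∂ν + ∫⁻ y, t y ∂ν ≤ ∫⁻ x, (s x)⁻¹ ∂μ + ∫⁻ y, t y ∂ν :=
      calc ∫⁻ y, t y ∂ν + ∫⁻ y, t y ∂ν = ∫⁻ x, 2 * t (ψ x) ∂μ := by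
            rw [lintegral_const_mul _ (by fun_prop : Measurable fun x => t (ψ x)),
              hψ.lintegral_comp htm, two_mul]
        _ ≤ ∫⁻ x, ((s x)⁻¹ + s x * t (ψ x) ^ 2) ∂μ :=
            lintegral_mono fun x => ENNReal.two_mul_le_inv_add_mul_sq _
              (ne_top_of_le_ne_top (ENNReal.natCast_ne_top m) (min_le_right _ _))
        _ = ∫⁻ x, (s x)⁻¹ ∂μ + ∫⁻ y, f y * t y ^ 2 ∂ν := by
            rw [lintegral_add_left (by fun_prop : Measurable fun x => (s x)⁻¹),
              hsf (fun y => t y ^ 2) (htm.pow_const 2)]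
        _ ≤ _ := by gcongr
    exact (ENNReal.add_le_add_iff_right hfin).1 hle
  have hsup : ∀ y, (f y)⁻¹ = ⨆ m : ℕ, min (f y)⁻¹ (m : ℝ≥0∞) := fun y => by
    rw [← inf_iSup_eq, ENNReal.iSup_natCast, inf_top_eq]
  have hmeas : ∀ m : ℕ, Measurable fun y => min (f y)⁻¹ (m : ℝ≥0∞) := fun m => by fun_prop
  rw [lintegral_congr hsup, lintegral_iSup hmeas
    fun i j hij y => min_le_min_left _ (by exact_mod_cast hij)]
  exact iSup_le bound

/-- Integration against a weighted sum of Radon–Nikodym derivatives of pushforwards. -/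
lemma lintegral_tsum_mul_rnDeriv_map_mul {ι X : Type*} [Countable ι] [MeasurableSpace X]
    {μ : Measure X} [IsFiniteMeasure μ] {φ : ι → X → X} (hφ : ∀ i, Measurable (φ i))
    (hac : ∀ i, μ.map (φ i) ≪ μ) (w : ι → ℝ≥0∞) {T : X → ℝ≥0∞} (hT : Measurable T) :
    ∫⁻ x, (∑' i, w i * (μ.map (φ i)).rnDeriv μ x) * T x ∂μ = ∑' i, w i * ∫⁻ x, T (φ i x) ∂μ := by
  simp_rw [← ENNReal.tsum_mul_right, mul_assoc]
  have hm : ∀ i, Measurable fun x => (μ.map (φ i)).rnDeriv μ x * T x := fun i => by fun_prop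
  rw [lintegral_tsum fun i => ((hm i).const_mul _).aemeasurable]
  refine tsum_congr fun i => ?_
  rw [lintegral_const_mul _ (hm i),
    lintegral_rnDeriv_mul (hac i) hT.aemeasurable, lintegral_map hT (hφ i)]

/-- strong recurrence passes to measure-preserving equivariant factors. -/
theorem stronglyRecurrent_factor
    {G X Y : Type*} [Group G] [Countable G]
    [MeasurableSpace X] [StandardBorelSpace X]
    [MeasurableSpace Y] [StandardBorelSpace Y]
    (μ : Measure X) (ν : Measure Y)
    [IsProbabilityMeasure μ] [IsProbabilityMeasure ν]
    (a : G → X → X) (b : G → Y → Y)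
    (haone : ∀ x, a 1 x = x) (hamul : ∀ (g h : G) x, a (g * h) x = a g (a h x))
    (hames : ∀ g : G, Measurable (a g))
    (hans : ∀ g : G, μ.map (a g) ≪ μ ∧ μ ≪ μ.map (a g))
    (hbone : ∀ y, b 1 y = y) (hbmul : ∀ (g h : G) y, b (g * h) y = b g (b h y))
    (hbmes : ∀ g : G, Measurable (b g))
    (hbns : ∀ g : G, ν.map (b g) ≪ ν ∧ ν ≪ ν.map (b g))
    (ψ : X → Y) (hψ : Measurable ψ)
    (hψeq : ∀ (g : G) (x : X), ψ (a g x) = b g (ψ x))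
    (hψpush : μ.map ψ = ν)
    (η : ℕ → G → ℝ≥0∞) (hη : ∀ n, ∑' h : G, η n h = 1)
    (hrec : StronglyRecurrentSeq μ a η) :
    StronglyRecurrentSeq ν b η := by
  have hmp : MeasurePreserving ψ μ ν := ⟨hψ, hψpush⟩
  refine tendsto_of_tendsto_of_tendsto_of_le_of_le tendsto_const_nhds hrec
    (fun _ => zero_le) fun n => ENNReal.tsum_le_tsum fun h => ?_
  gcongr
  refine lintegral_inv_le_of_lintegral_mul_comp_eq hmp
    (Measurable.tsum fun k => (Measure.measurable_rnDeriv _ _).const_mul _)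
    (Measurable.tsum fun k => (Measure.measurable_rnDeriv _ _).const_mul _)
    fun T hT => ?_
  rw [lintegral_tsum_mul_rnDeriv_map_mul (φ := fun k => a k⁻¹) (fun k => hames k⁻¹)
      (fun k => (hans k⁻¹).1) (fun k => η n (h * k⁻¹))
      (by fun_prop : Measurable fun x => T (ψ x)),
    lintegral_tsum_mul_rnDeriv_map_mul (φ := fun k => b k⁻¹) (fun k => hbmes k⁻¹)
      (fun k => (hbns k⁻¹).1) (fun k => η n (h * k⁻¹)) hT]
  refine tsum_congr fun k => ?_
  simp only [hψeq]
  rw [hmp.lintegral_comp (f := fun y => T (b k⁻¹ y)) (hT.comp (hbmes k⁻¹))]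
end
end
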